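/- Let L be a 3-dimensional real ω-Lie algebra with ω not identically zero (a nontrivial, i.e. non-Lie, real ω-Lie algebra). Then L is isomorphic to one of the following real ω-Lie algebras, each given on a basis {x,y,z} with all unlisted values of ω on basis pairs equal to 0: L₁ ([x,y] = y, [x,z] = 0, [y,z] = z, ω(x,y) = 1); L₂ ([x,y] = 0, [x,z] = y, [y,z] = z, ω(x,z) = 1); A_α ([x,y] = x, [x,z] = x+y, [y,z] = z+αx, ω(y,z) = −1) for some α ∈ ℝ; C_α ([x,y] = y, [x,z] = αz, [y,z] = x, ω(y,z) = 1+α) for some nonzero α ∈ ℝ; B₁ ([x,y] = y, [x,z] = y+z, [y,z] = x, ω(y,z) = 2); B₋₁ ([x,y] = y, [x,z] = y+z, [y,z] = −x, ω(y,z) = −2); E_α⁺ ([x,y] = −z, [x,z] = y+αz, [y,z] = x, ω(y,z) = α) for some nonzero α ∈ ℝ; or E_α⁻ ([x,y] = −z, [x,z] = y+αz, [y,z] = −x, ω(y,z) = −α) for some nonzero α ∈ ℝ. -/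

import Mathlib

/-- The bracket of the real `L₁` on `ℝ³`: bilinear extension of `[x,y] = y`,
`[x,z] = 0`, `[y,z] = z` on the standard basis `x = e₀, y = e₁, z = e₂`. -/
def brL1 (u v : Fin 3 → ℝ) : Fin 3 → ℝ :=
  ![0, u 0 * v 1 - u 1 * v 0, u 1 * v 2 - u 2 * v 1]

/-- The form of the real `L₁`: bilinear extension of `ω(x,y) = 1`, other values `0`. -/
def omL1 (u v : Fin 3 → ℝ) : ℝ := u 0 * v 1 - u 1 * v 0

/-- The bracket of the real `L₂` on `ℝ³`: bilinear extension of `[x,y] = 0`,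
`[x,z] = y`, `[y,z] = z`. -/
def brL2 (u v : Fin 3 → ℝ) : Fin 3 → ℝ :=
  ![0, u 0 * v 2 - u 2 * v 0, u 1 * v 2 - u 2 * v 1]

/-- The form of the real `L₂`: bilinear extension of `ω(x,z) = 1`, other values `0`. -/
def omL2 (u v : Fin 3 → ℝ) : ℝ := u 0 * v 2 - u 2 * v 0

/-- The bracket of the real `A_α` on `ℝ³`: bilinear extension of `[x,y] = x`,
`[x,z] = x + y`, `[y,z] = z + α x`. -/
def brA (α : ℝ) (u v : Fin 3 → ℝ) : Fin 3 → ℝ :=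
  ![(u 0 * v 1 - u 1 * v 0) + (u 0 * v 2 - u 2 * v 0) + α * (u 1 * v 2 - u 2 * v 1),
    u 0 * v 2 - u 2 * v 0, u 1 * v 2 - u 2 * v 1]

/-- The form of the real `A_α`: bilinear extension of `ω(y,z) = -1`, other values `0`. -/
def omA (u v : Fin 3 → ℝ) : ℝ := -(u 1 * v 2 - u 2 * v 1)

/-- The bracket of the real `C_α` on `ℝ³`: bilinear extension of `[x,y] = y`,
`[x,z] = α z`, `[y,z] = x`. -/
def brC (α : ℝ) (u v : Fin 3 → ℝ) : Fin 3 → ℝ :=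
  ![u 1 * v 2 - u 2 * v 1, u 0 * v 1 - u 1 * v 0, α * (u 0 * v 2 - u 2 * v 0)]

/-- The form of the real `C_α`: bilinear extension of `ω(y,z) = 1 + α`, other values `0`. -/
def omC (α : ℝ) (u v : Fin 3 → ℝ) : ℝ := (1 + α) * (u 1 * v 2 - u 2 * v 1)

/-- The bracket of the real `B₁` on `ℝ³`: bilinear extension of `[x,y] = y`,
`[x,z] = y + z`, `[y,z] = x`. -/
def brB1 (u v : Fin 3 → ℝ) : Fin 3 → ℝ :=
  ![u 1 * v 2 - u 2 * v 1, (u 0 * v 1 - u 1 * v 0) + (u 0 * v 2 - u 2 * v 0),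
    u 0 * v 2 - u 2 * v 0]

/-- The form of the real `B₁`: bilinear extension of `ω(y,z) = 2`, other values `0`. -/
def omB1 (u v : Fin 3 → ℝ) : ℝ := 2 * (u 1 * v 2 - u 2 * v 1)

/-- The bracket of the real `B₋₁` on `ℝ³`: bilinear extension of `[x,y] = y`,
`[x,z] = y + z`, `[y,z] = -x`. -/
def brBm1 (u v : Fin 3 → ℝ) : Fin 3 → ℝ :=
  ![-(u 1 * v 2 - u 2 * v 1), (u 0 * v 1 - u 1 * v 0) + (u 0 * v 2 - u 2 * v 0),
    u 0 * v 2 - u 2 * v 0]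

/-- The form of the real `B₋₁`: bilinear extension of `ω(y,z) = -2`, other values `0`. -/
def omBm1 (u v : Fin 3 → ℝ) : ℝ := -2 * (u 1 * v 2 - u 2 * v 1)

/-- The bracket of `E_α⁺` on `ℝ³`: bilinear extension of `[x,y] = -z`,
`[x,z] = y + α z`, `[y,z] = x`. -/
def brEp (α : ℝ) (u v : Fin 3 → ℝ) : Fin 3 → ℝ :=
  ![u 1 * v 2 - u 2 * v 1, u 0 * v 2 - u 2 * v 0,
    -(u 0 * v 1 - u 1 * v 0) + α * (u 0 * v 2 - u 2 * v 0)]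

/-- The form of `E_α⁺`: bilinear extension of `ω(y,z) = α`, other values `0`. -/
def omEp (α : ℝ) (u v : Fin 3 → ℝ) : ℝ := α * (u 1 * v 2 - u 2 * v 1)

/-- The bracket of `E_α⁻` on `ℝ³`: bilinear extension of `[x,y] = -z`,
`[x,z] = y + α z`, `[y,z] = -x`. -/
def brEm (α : ℝ) (u v : Fin 3 → ℝ) : Fin 3 → ℝ :=
  ![-(u 1 * v 2 - u 2 * v 1), u 0 * v 2 - u 2 * v 0,
    -(u 0 * v 1 - u 1 * v 0) + α * (u 0 * v 2 - u 2 * v 0)]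

/-- The form of `E_α⁻`: bilinear extension of `ω(y,z) = -α`, other values `0`. -/
def omEm (α : ℝ) (u v : Fin 3 → ℝ) : ℝ := -α * (u 1 * v 2 - u 2 * v 1)

/-- `(L, bracket, ω)` is isomorphic, as a real ω-Lie algebra, to the ω-Lie algebra on
`ℝ³` with bracket `br'` and form `ω'`: there is a linear bijection intertwining the
brackets and the bilinear forms. -/
def IsOmegaLieIsoTo {L : Type*} [AddCommGroup L] [Module ℝ L]
    (bracket : L →ₗ[ℝ] L →ₗ[ℝ] L) (ω : L →ₗ[ℝ] L →ₗ[ℝ] ℝ)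
    (br' : (Fin 3 → ℝ) → (Fin 3 → ℝ) → (Fin 3 → ℝ))
    (ω' : (Fin 3 → ℝ) → (Fin 3 → ℝ) → ℝ) : Prop :=
  ∃ f : L ≃ₗ[ℝ] (Fin 3 → ℝ),
    (∀ a b : L, f (bracket a b) = br' (f a) (f b)) ∧
    (∀ a b : L, ω' (f a) (f b) = ω a b)

/-!
Put `τ v = tr (ad v)`. In dimension three the `ω`-Jacobi identity gives `τ [u, v] = ω(u, v)` and,
for `x` spanning the radical of `ω`, `ω(y, z) x = τ(x) [y, z] + τ(y) [z, x] + τ(z) [x, y]`.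

If `τ x = 0`, then `τ y = 0` and `τ z = -1` may be arranged; the identities force `[x, y] = x`
and leave `L₁` or `A_α`. If `τ x ≠ 0`, then `ad x` preserves the plane `ker τ`, whose brackets lie
in the line of `x`, so the algebra is read off from that endomorphism of the plane: a scalar gives
`C₁`; otherwise there is a cyclic vector, and real distinct, double or non-real eigenvalues give
`C_α` or `L₂`, `B_{±1}`, and `E_α^±` respectively.
-/

section LinearAlgebra

theorem linearIndependent_rotate {R M : Type*} [Semiring R] [AddCommMonoid M]
    [Module R M] {x y z : M} (h : LinearIndependent R ![x, y, z]) :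
    LinearIndependent R ![y, z, x] := by
  convert h.comp _ (finRotate 3).injective using 1
  ext i
  fin_cases i <;> rfl

theorem exists_basis_fin_three {K L : Type*} [DivisionRing K] [AddCommGroup L] [Module K L]
    {x y z : L} (hdim : Module.finrank K L = 3) (h : LinearIndependent K ![x, y, z]) :
    ∃ b : Module.Basis (Fin 3) K L, b 0 = x ∧ b 1 = y ∧ b 2 = z :=
  ⟨basisOfLinearIndependentOfCardEqFinrank h (by simp [hdim]), by simp, by simp, by simp⟩

theorem exists_eq_smul_add_smul_add_smul {K L : Type*} [DivisionRing K] [AddCommGroup L]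
    [Module K L] {x y z : L} (hdim : Module.finrank K L = 3)
    (h : LinearIndependent K ![x, y, z]) (v : L) :
    ∃ p q r : K, v = p • x + q • y + r • z := by
  obtain ⟨b, rfl, rfl, rfl⟩ := exists_basis_fin_three hdim h
  exact ⟨_, _, _, (b.sum_repr v).symm.trans (Fin.sum_univ_three _)⟩

theorem linearIndependent_of_form {K L : Type*} [Field K] [AddCommGroup L] [Module K L]
    {x y z : L} {ω : L →ₗ[K] L →ₗ[K] K} (hω : ω.IsAlt) (hx : x ≠ 0) (hxy : ω x y = 0)
    (hxz : ω x z = 0) (hyz : ω y z ≠ 0) : LinearIndependent K ![x, y, z] := by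
  rw [Fintype.linearIndependent_iff]
  intro g hg
  have hsum : g 0 • x + g 1 • y + g 2 • z = 0 := by simpa [Fin.sum_univ_three] using hg
  have h1 : g 1 = 0 := by
    simpa [hω.self_eq_zero, hxz, hyz] using congrArg (ω · z) hsum
  have h2 : g 2 = 0 := by
    simpa [hω.self_eq_zero, hxy, ← hω.neg y z, hyz] using congrArg (ω · y) hsum
  have h0 : g 0 = 0 := by simpa [h1, h2, hx] using hsum
  intro i
  fin_cases i <;> assumption

end LinearAlgebra

section TraceAd

variable {R L : Type*} [CommRing R] [AddCommGroup L] [Module R L]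

/-- The linear form `v ↦ tr (ad v)` of a bilinear bracket, where `ad v = [v, ·]`. -/
noncomputable def traceAd (B : L →ₗ[R] L →ₗ[R] L) : L →ₗ[R] R :=
  LinearMap.trace R L ∘ₗ B

theorem traceAd_eq_sum_repr {ι : Type*} [Fintype ι] (b : Module.Basis ι R L)
    (B : L →ₗ[R] L →ₗ[R] L) (v : L) : traceAd B v = ∑ i, b.repr (B v (b i)) i := by
  classical
  simp only [traceAd, LinearMap.comp_apply, LinearMap.trace_eq_matrix_trace R b, Matrix.trace,
    Matrix.diag_apply, LinearMap.toMatrix_apply]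

theorem jacobiator_eq_traceAd_smul {B : L →ₗ[R] L →ₗ[R] L} (hB : B.IsAlt)
    (b : Module.Basis (Fin 3) R L) :
    B (B (b 0) (b 1)) (b 2) + B (B (b 1) (b 2)) (b 0) + B (B (b 2) (b 0)) (b 1) =
      traceAd B (b 0) • B (b 1) (b 2) + traceAd B (b 1) • B (b 2) (b 0)
        + traceAd B (b 2) • B (b 0) (b 1) := by
  have hrepr (v : L) : ∃ p q r : R, v = p • b 0 + q • b 1 + r • b 2 :=
    ⟨_, _, _, (b.sum_repr v).symm.trans (Fin.sum_univ_three _)⟩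
  obtain ⟨p, q, r, h01⟩ := hrepr (B (b 0) (b 1))
  obtain ⟨s, t, u, h12⟩ := hrepr (B (b 1) (b 2))
  obtain ⟨k, l, m, h20⟩ := hrepr (B (b 2) (b 0))
  simp only [traceAd_eq_sum_repr b, Fin.sum_univ_three, hB.self_eq_zero, ← hB.neg (b 0) (b 1),
    ← hB.neg (b 1) (b 2), ← hB.neg (b 2) (b 0), h01, h12, h20, map_add, map_neg, map_smul,
    map_zero, LinearMap.add_apply, LinearMap.smul_apply, Module.Basis.repr_self,
    Finsupp.add_apply, Finsupp.neg_apply, Finsupp.smul_apply, Finsupp.zero_apply, Fin.isValue,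
    Finsupp.single_eq_same, Finsupp.single_eq_of_ne, ne_eq, one_ne_zero, zero_ne_one,
    Fin.reduceEq, not_false_eq_true, smul_eq_mul, mul_zero, mul_one, neg_zero, zero_add,
    add_zero, neg_add_rev, smul_zero]
  module

end TraceAd

/-- The `ω`-Jacobi identity, for a bracket and a form given as plain functions so that it also
applies to the explicit algebras on `ℝ³`. -/
def OmegaJacobi (R : Type*) {L : Type*} [Add L] [SMul R L]
    (bracket : L → L → L) (ω : L → L → R) : Prop :=
  ∀ a b c, bracket (bracket a b) c + bracket (bracket b c) a + bracket (bracket c a) b =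
    ω a b • c + ω b c • a + ω c a • b

theorem OmegaJacobi.form_unique {K L : Type*} [Field K] [AddCommGroup L] [Module K L]
    {bracket : L → L → L} {ω ω' : L → L → K} (h : OmegaJacobi K bracket ω)
    (h' : OmegaJacobi K bracket ω') (hdim : 2 < Module.finrank K L) (a b : L) :
    ω a b = ω' a b := by
  classical
  obtain ⟨c, -, hc⟩ := SetLike.exists_of_lt <|
    span_lt_top_of_card_lt_finrank (s := ({a, b} : Set L))
      ((Set.toFinset_card _).trans_le (by
        simpa using Finset.card_le_two (a := a) (b := b)) |>.trans_lt hdim)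
  by_contra hne
  refine hc (Submodule.mem_span_pair.2
    ⟨(ω a b - ω' a b)⁻¹ * (ω' b c - ω b c), (ω a b - ω' a b)⁻¹ * (ω' c a - ω c a), ?_⟩)
  have hcoef : (ω a b - ω' a b) • c = (ω' b c - ω b c) • a + (ω' c a - ω c a) • b := by
    linear_combination (norm := module) (h' a b c) - h a b c
  rw [mul_smul, mul_smul, ← smul_add, ← hcoef, inv_smul_smul₀ (sub_ne_zero.2 hne)]

/-- An `ω`-Lie algebra structure on `L`; the bracket and the form are required to be alternating,
which is anticommutativity as soon as `2` is invertible. -/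
structure IsOmegaLie {R L : Type*} [CommRing R] [AddCommGroup L] [Module R L]
    (B : L →ₗ[R] L →ₗ[R] L) (ω : L →ₗ[R] L →ₗ[R] R) : Prop where
  bracket_isAlt : B.IsAlt
  form_isAlt : ω.IsAlt
  jacobi : OmegaJacobi R (fun a b ↦ B a b) (fun a b ↦ ω a b)

/-- `x` spans the radical of `ω` and `y`, `z` descend to a basis of the quotient: the triples
adapted to an alternating form of rank two on a three-dimensional space. -/
structure IsAdapted {K L : Type*} [Field K] [AddCommGroup L] [Module K L]
    (ω : L →ₗ[K] L →ₗ[K] K) (x y z : L) : Prop where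
  radical : ∀ v, ω x v = 0
  ne_zero : x ≠ 0
  form_ne_zero : ω y z ≠ 0

section Adapted

variable {K L : Type*} [Field K] [AddCommGroup L] [Module K L]
  {B : L →ₗ[K] L →ₗ[K] L} {ω : L →ₗ[K] L →ₗ[K] K} {x y z : L}

namespace IsAdapted

theorem linearIndependent (h : IsAdapted ω x y z) (hω : ω.IsAlt) :
    LinearIndependent K ![x, y, z] :=
  linearIndependent_of_form hω h.ne_zero (h.radical y) (h.radical z) h.form_ne_zero

theorem replace (h : IsAdapted ω x y z) {c : K} (hc : c ≠ 0) {y' z' : L} (hyz : ω y' z' ≠ 0) :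
    IsAdapted ω (c • x) y' z' where
  radical v := by simp [h.radical]
  ne_zero := smul_ne_zero hc h.ne_zero
  form_ne_zero := hyz

end IsAdapted

theorem exists_isAdapted (hω : ω.IsAlt) (hdim : Module.finrank K L = 3) (hyz : ω y z ≠ 0) :
    ∃ x, IsAdapted ω x y z := by
  have : FiniteDimensional K L := Module.finite_of_finrank_pos (by omega)
  obtain ⟨x, hx, hx0⟩ := Submodule.exists_mem_ne_zero_of_ne_bot <|
    LinearMap.ker_ne_bot_of_finrank_lt (f := (ω.flip y).prod (ω.flip z)) (by simp [hdim])
  obtain ⟨hxy, hxz⟩ : ω x y = 0 ∧ ω x z = 0 := by simpa using hx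
  refine ⟨x, fun v ↦ ?_, hx0, hyz⟩
  obtain ⟨p, q, r, rfl⟩ := exists_eq_smul_add_smul_add_smul hdim
    (linearIndependent_of_form hω hx0 hxy hxz hyz) v
  simp [hω.self_eq_zero, hxy, hxz]

namespace IsOmegaLie

theorem traceAd_bracket {R L : Type*} [CommRing R] [AddCommGroup L] [Module R L]
    [Module.Free R L] [Module.Finite R L] {B : L →ₗ[R] L →ₗ[R] L} {ω : L →ₗ[R] L →ₗ[R] R}
    (H : IsOmegaLie B ω) (u v : L) :
    traceAd B (B u v) = (Module.finrank R L - 2) * ω u v := by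
  have had : B (B u v) = B u * B v - B v * B u + ω u v • LinearMap.id
      + (ω v).smulRight u - (ω u).smulRight v := by
    ext w
    have hj := H.jacobi u v w
    simp only [← H.bracket_isAlt.neg u (B v w), ← H.bracket_isAlt.neg u w,
      ← H.bracket_isAlt.neg v (B u w), ← H.form_isAlt.neg u w, map_neg, LinearMap.neg_apply] at hj
    simp only [LinearMap.sub_apply, LinearMap.add_apply, Module.End.mul_apply,
      LinearMap.smul_apply, LinearMap.id_coe, id_eq, LinearMap.coe_smulRight]
    linear_combination (norm := module) hj
  simp only [traceAd, LinearMap.comp_apply, had, map_add, map_sub, map_smul,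
    LinearMap.trace_mul_comm R (B v), LinearMap.trace_id, LinearMap.trace_smulRight, smul_eq_mul,
    ← H.form_isAlt.neg u v]
  ring

theorem traceAd_bracket_of_finrank_eq_three (H : IsOmegaLie B ω)
    (hdim : Module.finrank K L = 3) (u v : L) : traceAd B (B u v) = ω u v := by
  have : FiniteDimensional K L := Module.finite_of_finrank_pos (by omega)
  rw [H.traceAd_bracket, hdim]
  push_cast
  ring

theorem form_smul_eq_traceAd_smul (H : IsOmegaLie B ω) (hdim : Module.finrank K L = 3)
    (h : IsAdapted ω x y z) :
    ω y z • x = traceAd B x • B y z + traceAd B y • B z x + traceAd B z • B x y := by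
  obtain ⟨b, rfl, rfl, rfl⟩ := exists_basis_fin_three hdim (h.linearIndependent H.form_isAlt)
  have hj := H.jacobi (b 0) (b 1) (b 2)
  rw [jacobiator_eq_traceAd_smul H.bracket_isAlt] at hj
  simpa [h.radical, ← H.form_isAlt.neg (b 0) (b 2)] using hj.symm

theorem bracket_bracket_of_radical (H : IsOmegaLie B ω) (hx : ∀ v, ω x v = 0) (u v : L) :
    B x (B u v) = B (B x u) v + B u (B x v) - ω u v • x := by
  have hj := H.jacobi x u v
  simp only [← H.bracket_isAlt.neg x (B u v), ← H.bracket_isAlt.neg u (B x v),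
    ← H.bracket_isAlt.neg x v, ← H.form_isAlt.neg x v, hx, map_neg, LinearMap.neg_apply] at hj
  linear_combination (norm := module) -hj

theorem exists_traceAd_eq_neg_one (H : IsOmegaLie B ω) (hdim : Module.finrank K L = 3)
    (hyz : ω y z ≠ 0) : ∃ y z, traceAd B y = 0 ∧ traceAd B z = -1 ∧ ω y z = -1 := by
  obtain ⟨y, z, hz, hyz⟩ : ∃ y z, traceAd B z ≠ 0 ∧ ω y z ≠ 0 := by
    have htr : traceAd B (B y z) ≠ 0 := by
      rwa [H.traceAd_bracket_of_finrank_eq_three hdim]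
    by_cases hz : traceAd B z = 0
    · by_cases hy : ω y (B y z) = 0
      · exact ⟨y, z + B y z, by simpa [hz], by simpa [hy]⟩
      · exact ⟨y, B y z, htr, hy⟩
    · exact ⟨y, z, hz, hyz⟩
  refine ⟨(traceAd B z / ω y z) • (y - (traceAd B y / traceAd B z) • z),
    -(traceAd B z)⁻¹ • z, by simp [hz], by simp [hz], ?_⟩
  simp only [map_smul, map_sub, LinearMap.smul_apply, LinearMap.sub_apply,
    H.form_isAlt.self_eq_zero, smul_eq_mul]
  field_simp
  ring

theorem exists_brackets_of_traceAd_eq_zero (H : IsOmegaLie B ω)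
    (hdim : Module.finrank K L = 3) (h : IsAdapted ω x y z) (hx : traceAd B x = 0) :
    ∃ y z, IsAdapted ω x y z ∧ ∃ d e r s : K, d + s = 1 ∧ B x y = x ∧
      B x z = d • x + e • y ∧ B y z = r • x + s • y + z := by
  obtain ⟨y, z, hy, hz, hyz⟩ := H.exists_traceAd_eq_neg_one hdim h.form_ne_zero
  replace h : IsAdapted ω x y z := ⟨h.radical, h.ne_zero, by simp [hyz]⟩
  have hli := h.linearIndependent H.form_isAlt
  have hxy : B x y = x := by
    simpa [hx, hy, hz, hyz] using (H.form_smul_eq_traceAd_smul hdim h).symm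
  obtain ⟨d, e, f, hxz⟩ := exists_eq_smul_add_smul_add_smul hdim hli (B x z)
  obtain ⟨r, s, t, hyz'⟩ := exists_eq_smul_add_smul_add_smul hdim hli (B y z)
  have hf : f = 0 := by
    simpa [hxz, hx, hy, hz, h.radical] using H.traceAd_bracket_of_finrank_eq_three hdim x z
  have ht : t = 1 := by
    simpa [hyz', hx, hy, hz, hyz] using H.traceAd_bracket_of_finrank_eq_three hdim y z
  subst hf ht
  refine ⟨y, z, h, d, e, r, s, ?_, hxy, by simpa using hxz, by simpa using hyz'⟩
  have hder := H.bracket_bracket_of_radical h.radical y z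
  simp only [hyz', hxy, hxz, hyz, map_add, map_smul, H.bracket_isAlt.self_eq_zero,
    ← H.bracket_isAlt.neg x y] at hder
  apply smul_left_injective K h.ne_zero
  linear_combination (norm := module) hder

theorem exists_isAdapted_traceAd_eq_zero (H : IsOmegaLie B ω) (h : IsAdapted ω x y z)
    (hx : traceAd B x ≠ 0) :
    ∃ y z, IsAdapted ω x y z ∧ traceAd B y = 0 ∧ traceAd B z = 0 := by
  refine ⟨y - (traceAd B y / traceAd B x) • x, z - (traceAd B z / traceAd B x) • x,
    ⟨h.radical, h.ne_zero, ?_⟩, by simp [hx], by simp [hx]⟩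
  simp [h.radical, ← H.form_isAlt.neg x y, h.form_ne_zero]

theorem exists_bracket_eq_smul_radical (H : IsOmegaLie B ω) (hdim : Module.finrank K L = 3)
    (h : IsAdapted ω x y z) (hx : traceAd B x ≠ 0) (hy : traceAd B y = 0)
    (hz : traceAd B z = 0) : ∃ r : K, B y z = r • x := by
  refine ⟨(traceAd B x)⁻¹ * ω y z, ?_⟩
  rw [mul_smul, H.form_smul_eq_traceAd_smul hdim h, hy, hz, zero_smul, zero_smul, add_zero,
    add_zero, inv_smul_smul₀ hx]

theorem exists_bracket_eq_smul_add_smul (H : IsOmegaLie B ω) (hdim : Module.finrank K L = 3)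
    (h : IsAdapted ω x y z) (hx : traceAd B x ≠ 0) (hy : traceAd B y = 0)
    (hz : traceAd B z = 0) (v : L) : ∃ b c : K, B x v = b • y + c • z := by
  obtain ⟨a, b, c, hv⟩ :=
    exists_eq_smul_add_smul_add_smul hdim (h.linearIndependent H.form_isAlt) (B x v)
  have ha : a = 0 := by
    simpa [hv, hx, hy, hz, h.radical] using H.traceAd_bracket_of_finrank_eq_three hdim x v
  exact ⟨b, c, by simpa [ha] using hv⟩

end IsOmegaLie

/-- `IsCompanion B ω q p r x u v`: an adapted triple with `[u, v] = r x` on which `ad x` acts, in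
the basis `u`, `v` of the plane they span, as the companion matrix of `t² - q t + p`. -/
structure IsCompanion (B : L →ₗ[K] L →ₗ[K] L) (ω : L →ₗ[K] L →ₗ[K] K) (q p r : K)
    (x u v : L) : Prop extends IsAdapted ω x u v where
  bracket_left : B x u = v
  bracket_right : B x v = q • v - p • u
  bracket_plane : B u v = r • x

variable {q p r : K} {u v : L}

namespace IsCompanion

theorem rescale (h : IsCompanion B ω q p r x u v) {m : K} (hm : m ≠ 0) :
    IsCompanion B ω q p (m ^ 2 * r) x (m • u) (m • v) where
  radical := h.radical
  ne_zero := h.ne_zero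
  form_ne_zero := by simp [hm, h.form_ne_zero]
  bracket_left := by rw [map_smul, h.bracket_left]
  bracket_right := by rw [map_smul, h.bracket_right]; module
  bracket_plane := by
    rw [map_smul, map_smul, LinearMap.smul_apply, h.bracket_plane]
    module

end IsCompanion

namespace IsOmegaLie

theorem mul_eq_form_of_isCompanion (H : IsOmegaLie B ω) (h : IsCompanion B ω q p r x u v) :
    q * r = ω u v := by
  have hder := H.bracket_bracket_of_radical h.radical u v
  simp only [h.bracket_left, h.bracket_right, h.bracket_plane, map_sub, map_smul,
    H.bracket_isAlt.self_eq_zero] at hder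
  apply smul_left_injective K h.ne_zero
  linear_combination (norm := module) -hder

theorem exists_isCompanion (H : IsOmegaLie B ω) (hdim : Module.finrank K L = 3)
    (hx : traceAd B x ≠ 0) (hu : traceAd B u = 0) (h : IsAdapted ω x u (B x u)) :
    ∃ q p r : K, IsCompanion B ω q p r x u (B x u) := by
  have hv : traceAd B (B x u) = 0 := by
    rw [H.traceAd_bracket_of_finrank_eq_three hdim, h.radical]
  obtain ⟨r, hr⟩ := H.exists_bracket_eq_smul_radical hdim h hx hu hv
  obtain ⟨p, q, hpq⟩ := H.exists_bracket_eq_smul_add_smul hdim h hx hu hv (B x u)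
  exact ⟨q, -p, r, h, rfl, by rw [hpq]; module, hr⟩

theorem exists_bracket_eq_smul_of_forall_form_eq_zero (H : IsOmegaLie B ω)
    (hdim : Module.finrank K L = 3) (h : IsAdapted ω x y z) (hx : traceAd B x ≠ 0)
    (hy : traceAd B y = 0) (hz : traceAd B z = 0)
    (hform : ∀ u, traceAd B u = 0 → ω u (B x u) = 0) :
    ∃ b r : K, b ≠ 0 ∧ r ≠ 0 ∧ B x y = b • y ∧ B x z = b • z ∧ B y z = r • x := by
  obtain ⟨r, hyz⟩ := H.exists_bracket_eq_smul_radical hdim h hx hy hz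
  obtain ⟨b, c, hxy⟩ := H.exists_bracket_eq_smul_add_smul hdim h hx hy hz y
  obtain ⟨e, f, hxz⟩ := H.exists_bracket_eq_smul_add_smul hdim h hx hy hz z
  have hc : c = 0 := by
    simpa [hxy, H.form_isAlt.self_eq_zero, h.form_ne_zero] using hform y hy
  have he : e = 0 := by
    simpa [hxz, H.form_isAlt.self_eq_zero, ← H.form_isAlt.neg y z, h.form_ne_zero]
      using hform z hz
  subst hc he
  have hbf : f = b := by
    have hsum := hform (y + z) (by simp [hy, hz])
    simp only [map_add, LinearMap.add_apply, map_smul, hxy, hxz, zero_smul, add_zero, zero_add,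
      H.form_isAlt.self_eq_zero, ← H.form_isAlt.neg y z, smul_eq_mul] at hsum
    apply mul_right_cancel₀ h.form_ne_zero
    linear_combination hsum
  subst hbf
  have hbr : 2 * f * r = ω y z := by
    have hder := H.bracket_bracket_of_radical h.radical y z
    simp only [hxy, hxz, hyz, map_add, map_smul, LinearMap.add_apply, LinearMap.smul_apply,
      H.bracket_isAlt.self_eq_zero] at hder
    apply smul_left_injective K h.ne_zero
    linear_combination (norm := module) -hder
  have hne : 2 * f * r ≠ 0 := hbr ▸ h.form_ne_zero
  exact ⟨f, r, right_ne_zero_of_mul (left_ne_zero_of_mul hne), right_ne_zero_of_mul hne,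
    by simpa using hxy, by simpa using hxz, hyz⟩

end IsOmegaLie

end Adapted

section Models

theorem omegaJacobi_L1 : OmegaJacobi ℝ brL1 omL1 := by
  intro u v w
  ext i
  fin_cases i <;> simp [brL1, omL1] <;> ring

theorem omegaJacobi_L2 : OmegaJacobi ℝ brL2 omL2 := by
  intro u v w
  ext i
  fin_cases i <;> simp [brL2, omL2] <;> ring

theorem omegaJacobi_A (α : ℝ) : OmegaJacobi ℝ (brA α) omA := by
  intro u v w
  ext i
  fin_cases i <;> simp [brA, omA] <;> ring

theorem omegaJacobi_C (α : ℝ) : OmegaJacobi ℝ (brC α) (omC α) := by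
  intro u v w
  ext i
  fin_cases i <;> simp [brC, omC] <;> ring

theorem omegaJacobi_B1 : OmegaJacobi ℝ brB1 omB1 := by
  intro u v w
  ext i
  fin_cases i <;> simp [brB1, omB1] <;> ring

theorem omegaJacobi_Bm1 : OmegaJacobi ℝ brBm1 omBm1 := by
  intro u v w
  ext i
  fin_cases i <;> simp [brBm1, omBm1] <;> ring

theorem omegaJacobi_Ep (α : ℝ) : OmegaJacobi ℝ (brEp α) (omEp α) := by
  intro u v w
  ext i
  fin_cases i <;> simp [brEp, omEp] <;> ring

theorem omegaJacobi_Em (α : ℝ) : OmegaJacobi ℝ (brEm α) (omEm α) := by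
  intro u v w
  ext i
  fin_cases i <;> simp [brEm, omEm] <;> ring

end Models

namespace IsOmegaLie

variable {L : Type*} [AddCommGroup L] [Module ℝ L]
  {B : L →ₗ[ℝ] L →ₗ[ℝ] L} {ω : L →ₗ[ℝ] L →ₗ[ℝ] ℝ} {x y z : L}

-- The forms need not be compared: each is determined by its bracket.
theorem isOmegaLieIsoTo_of_basis (H : IsOmegaLie B ω) (hdim : Module.finrank ℝ L = 3)
    {br : (Fin 3 → ℝ) → (Fin 3 → ℝ) → (Fin 3 → ℝ)} {om : (Fin 3 → ℝ) → (Fin 3 → ℝ) → ℝ}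
    (hbr : OmegaJacobi ℝ br om) (h : LinearIndependent ℝ ![x, y, z])
    (hconst : ∀ u v : Fin 3 → ℝ,
      (u 0 * v 1 - u 1 * v 0) • B x y + (u 0 * v 2 - u 2 * v 0) • B x z
        + (u 1 * v 2 - u 2 * v 1) • B y z = br u v 0 • x + br u v 1 • y + br u v 2 • z) :
    IsOmegaLieIsoTo B ω br om := by
  obtain ⟨b, rfl, rfl, rfl⟩ := exists_basis_fin_three hdim h
  set e := b.equivFun.symm with he
  have he_apply (u : Fin 3 → ℝ) : e u = u 0 • b 0 + u 1 • b 1 + u 2 • b 2 := by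
    rw [he, b.equivFun_symm_apply, Fin.sum_univ_three]
  have hbracket (u v : Fin 3 → ℝ) : B (e u) (e v) = e (br u v) := by
    rw [he_apply (br u v), ← hconst, he_apply, he_apply]
    simp only [map_add, map_smul, LinearMap.add_apply, LinearMap.smul_apply,
      H.bracket_isAlt.self_eq_zero, ← H.bracket_isAlt.neg (b 0) (b 1),
      ← H.bracket_isAlt.neg (b 0) (b 2), ← H.bracket_isAlt.neg (b 1) (b 2)]
    module
  have hjacobi : OmegaJacobi ℝ br (fun u v ↦ ω (e u) (e v)) := by
    intro u v w
    apply e.injective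
    simpa only [map_add, map_smul, hbracket] using H.jacobi (e u) (e v) (e w)
  refine ⟨e.symm, fun u v ↦ ?_, fun u v ↦ ?_⟩
  · rw [LinearEquiv.symm_apply_eq, ← hbracket, e.apply_symm_apply, e.apply_symm_apply]
  · simpa using hbr.form_unique hjacobi (by simp) (e.symm u) (e.symm v)

theorem isOmegaLieIsoTo_L1 (H : IsOmegaLie B ω) (hdim : Module.finrank ℝ L = 3)
    (h : LinearIndependent ℝ ![x, y, z]) (hxy : B x y = y) (hxz : B x z = 0) (hyz : B y z = z) :
    IsOmegaLieIsoTo B ω brL1 omL1 :=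
  H.isOmegaLieIsoTo_of_basis hdim omegaJacobi_L1 h fun u v ↦ by simp [hxy, hxz, hyz, brL1]

theorem isOmegaLieIsoTo_L2 (H : IsOmegaLie B ω) (hdim : Module.finrank ℝ L = 3)
    (h : LinearIndependent ℝ ![x, y, z]) (hxy : B x y = 0) (hxz : B x z = y) (hyz : B y z = z) :
    IsOmegaLieIsoTo B ω brL2 omL2 :=
  H.isOmegaLieIsoTo_of_basis hdim omegaJacobi_L2 h fun u v ↦ by simp [hxy, hxz, hyz, brL2]

theorem isOmegaLieIsoTo_A (H : IsOmegaLie B ω) (hdim : Module.finrank ℝ L = 3) {α : ℝ}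
    (h : LinearIndependent ℝ ![x, y, z]) (hxy : B x y = x) (hxz : B x z = x + y)
    (hyz : B y z = z + α • x) :
    IsOmegaLieIsoTo B ω (brA α) omA :=
  H.isOmegaLieIsoTo_of_basis hdim (omegaJacobi_A α) h fun u v ↦ by
    simp only [hxy, hxz, hyz, brA, Matrix.cons_val]
    module

theorem isOmegaLieIsoTo_C (H : IsOmegaLie B ω) (hdim : Module.finrank ℝ L = 3) {α : ℝ}
    (h : LinearIndependent ℝ ![x, y, z]) (hxy : B x y = y) (hxz : B x z = α • z)
    (hyz : B y z = x) :
    IsOmegaLieIsoTo B ω (brC α) (omC α) :=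
  H.isOmegaLieIsoTo_of_basis hdim (omegaJacobi_C α) h fun u v ↦ by
    simp only [hxy, hxz, hyz, brC, Matrix.cons_val]
    module

theorem isOmegaLieIsoTo_B1 (H : IsOmegaLie B ω) (hdim : Module.finrank ℝ L = 3)
    (h : LinearIndependent ℝ ![x, y, z]) (hxy : B x y = y) (hxz : B x z = y + z)
    (hyz : B y z = x) :
    IsOmegaLieIsoTo B ω brB1 omB1 :=
  H.isOmegaLieIsoTo_of_basis hdim omegaJacobi_B1 h fun u v ↦ by
    simp only [hxy, hxz, hyz, brB1, Matrix.cons_val]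
    module

theorem isOmegaLieIsoTo_Bm1 (H : IsOmegaLie B ω) (hdim : Module.finrank ℝ L = 3)
    (h : LinearIndependent ℝ ![x, y, z]) (hxy : B x y = y) (hxz : B x z = y + z)
    (hyz : B y z = -x) :
    IsOmegaLieIsoTo B ω brBm1 omBm1 :=
  H.isOmegaLieIsoTo_of_basis hdim omegaJacobi_Bm1 h fun u v ↦ by
    simp only [hxy, hxz, hyz, brBm1, Matrix.cons_val]
    module

theorem isOmegaLieIsoTo_Ep (H : IsOmegaLie B ω) (hdim : Module.finrank ℝ L = 3) {α : ℝ}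
    (h : LinearIndependent ℝ ![x, y, z]) (hxy : B x y = -z) (hxz : B x z = y + α • z)
    (hyz : B y z = x) :
    IsOmegaLieIsoTo B ω (brEp α) (omEp α) :=
  H.isOmegaLieIsoTo_of_basis hdim (omegaJacobi_Ep α) h fun u v ↦ by
    simp only [hxy, hxz, hyz, brEp, Matrix.cons_val]
    module

theorem isOmegaLieIsoTo_Em (H : IsOmegaLie B ω) (hdim : Module.finrank ℝ L = 3) {α : ℝ}
    (h : LinearIndependent ℝ ![x, y, z]) (hxy : B x y = -z) (hxz : B x z = y + α • z)
    (hyz : B y z = -x) :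
    IsOmegaLieIsoTo B ω (brEm α) (omEm α) :=
  H.isOmegaLieIsoTo_of_basis hdim (omegaJacobi_Em α) h fun u v ↦ by
    simp only [hxy, hxz, hyz, brEm, Matrix.cons_val]
    module

end IsOmegaLie

theorem IsCompanion.exists_normalized {L : Type*} [AddCommGroup L] [Module ℝ L]
    {B : L →ₗ[ℝ] L →ₗ[ℝ] L} {ω : L →ₗ[ℝ] L →ₗ[ℝ] ℝ} {x u v : L} {q p r : ℝ}
    (h : IsCompanion B ω q p r x u v) (hr : r ≠ 0) :
    ∃ ε u v, (ε = -1 ∨ ε = 1) ∧ IsCompanion B ω q p ε x u v := by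
  have hsign : (√|r|)⁻¹ ^ 2 * r = SignType.sign r := by
    rw [inv_pow, Real.sq_sqrt (abs_nonneg r), inv_mul_eq_iff_eq_mul₀ (abs_ne_zero.2 hr),
      abs_mul_sign]
  refine ⟨_, _, _, ?_, h.rescale (m := (√|r|)⁻¹) (by simpa using hr)⟩
  rcases hr.lt_or_gt with hneg | hpos
  · exact .inl (by rw [hsign, sign_neg hneg, SignType.coe_neg_one])
  · exact .inr (by rw [hsign, sign_pos hpos, SignType.coe_one])

theorem exists_add_eq_mul_eq_of_discrim_pos {q p : ℝ} (hq : q ≠ 0) (hd : 0 < q ^ 2 - 4 * p) :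
    ∃ β γ : ℝ, β + γ = q ∧ β * γ = p ∧ β ≠ γ ∧ β ≠ 0 := by
  wlog hpos : 0 < q generalizing q
  · obtain ⟨β, γ, hsum, hprod, hne, hβ⟩ := this (q := -q) (neg_ne_zero.2 hq) (by rwa [neg_sq])
      (by simpa using lt_of_le_of_ne (not_lt.1 hpos) hq)
    exact ⟨-β, -γ, by linarith, by linarith, by simpa, by simpa⟩
  have hsqrt : √(q ^ 2 - 4 * p) ^ 2 = q ^ 2 - 4 * p := Real.sq_sqrt hd.le
  have hsqrt_pos : 0 < √(q ^ 2 - 4 * p) := Real.sqrt_pos.2 hd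
  exact ⟨(q + √(q ^ 2 - 4 * p)) / 2, (q - √(q ^ 2 - 4 * p)) / 2, by ring,
    by linear_combination -hsqrt / 4, by linarith, by positivity⟩

namespace IsOmegaLie

variable {L : Type*} [AddCommGroup L] [Module ℝ L]
  {B : L →ₗ[ℝ] L →ₗ[ℝ] L} {ω : L →ₗ[ℝ] L →ₗ[ℝ] ℝ} {x y z u v : L} {q p r : ℝ}

theorem isOmegaLieIsoTo_L1_of_isAdapted (H : IsOmegaLie B ω) (hdim : Module.finrank ℝ L = 3)
    (h : IsAdapted ω x y z) {d : ℝ} (hxy : B x y = x) (hxz : B x z = d • x)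
    (hyz : B y z = r • x + (1 - d) • y + z) : IsOmegaLieIsoTo B ω brL1 omL1 := by
  have hform : ω (d • y - z) (-r • x + (d - 1) • y - z) = -ω y z := by
    simp only [map_add, map_sub, map_smul, LinearMap.sub_apply, LinearMap.smul_apply,
      smul_eq_mul, H.form_isAlt.self_eq_zero, ← H.form_isAlt.neg x y, ← H.form_isAlt.neg x z,
      ← H.form_isAlt.neg y z, h.radical]
    ring
  have hind : IsAdapted ω ((1 : ℝ) • x) (d • y - z) (-r • x + (d - 1) • y - z) :=
    h.replace one_ne_zero <| hform ▸ neg_ne_zero.2 h.form_ne_zero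
  refine H.isOmegaLieIsoTo_L1 hdim
    (linearIndependent_rotate (hind.linearIndependent H.form_isAlt)) ?_ ?_ ?_
  all_goals
    simp only [map_add, map_sub, map_smul, LinearMap.add_apply, LinearMap.sub_apply,
      LinearMap.smul_apply, H.bracket_isAlt.self_eq_zero, ← H.bracket_isAlt.neg x y,
      ← H.bracket_isAlt.neg x z, ← H.bracket_isAlt.neg y z, hxy, hxz, hyz]
    module

theorem isOmegaLieIsoTo_A_of_isAdapted (H : IsOmegaLie B ω) (hdim : Module.finrank ℝ L = 3)
    (h : IsAdapted ω x y z) {d e : ℝ} (he : e ≠ 0) (hxy : B x y = x)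
    (hxz : B x z = d • x + e • y) (hyz : B y z = r • x + (1 - d) • y + z) :
    IsOmegaLieIsoTo B ω (brA (r * e - (1 - d) * d)) omA := by
  have hind : IsAdapted ω (e⁻¹ • x) (y - ((1 - d) / e) • x) z :=
    h.replace (inv_ne_zero he) <| by simpa [h.radical] using h.form_ne_zero
  refine H.isOmegaLieIsoTo_A hdim (hind.linearIndependent H.form_isAlt) ?_ ?_ ?_
  all_goals
    simp only [map_sub, map_smul, LinearMap.sub_apply, LinearMap.smul_apply,
      H.bracket_isAlt.self_eq_zero, hxy, hxz, hyz]
    match_scalars <;> field_simp <;> ring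

theorem isOmegaLieIsoTo_L1_or_A (H : IsOmegaLie B ω) (hdim : Module.finrank ℝ L = 3)
    (h : IsAdapted ω x y z) (hx : traceAd B x = 0) :
    IsOmegaLieIsoTo B ω brL1 omL1 ∨ ∃ α : ℝ, IsOmegaLieIsoTo B ω (brA α) omA := by
  obtain ⟨y, z, h, d, e, r, s, hds, hxy, hxz, hyz⟩ :=
    H.exists_brackets_of_traceAd_eq_zero hdim h hx
  obtain rfl : s = 1 - d := by linear_combination hds
  by_cases he : e = 0
  · exact .inl (H.isOmegaLieIsoTo_L1_of_isAdapted hdim h hxy (by simpa [he] using hxz) hyz)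
  · exact .inr ⟨_, H.isOmegaLieIsoTo_A_of_isAdapted hdim h he hxy hxz hyz⟩

theorem isOmegaLieIsoTo_C_of_smul (H : IsOmegaLie B ω) (hdim : Module.finrank ℝ L = 3)
    {b : ℝ} (h : IsAdapted ω x y z) (hb : b ≠ 0) (hr : r ≠ 0) (hxy : B x y = b • y)
    (hxz : B x z = b • z) (hyz : B y z = r • x) : IsOmegaLieIsoTo B ω (brC 1) (omC 1) := by
  have hind : IsAdapted ω (b⁻¹ • x) y ((r * b)⁻¹ • z) :=
    h.replace (inv_ne_zero hb) <| by simp [hb, hr, h.form_ne_zero]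
  refine H.isOmegaLieIsoTo_C hdim (hind.linearIndependent H.form_isAlt) ?_ ?_ ?_
  all_goals
    simp only [map_smul, LinearMap.smul_apply, hxy, hxz, hyz]
    match_scalars
    field_simp

theorem isOmegaLieIsoTo_C_of_isCompanion (H : IsOmegaLie B ω) (hdim : Module.finrank ℝ L = 3)
    {β γ : ℝ} (h : IsCompanion B ω (β + γ) (β * γ) r x u v) (hr : r ≠ 0) (hne : β ≠ γ)
    (hβ : β ≠ 0) : IsOmegaLieIsoTo B ω (brC (γ / β)) (omC (γ / β)) := by
  have hsub : β - γ ≠ 0 := sub_ne_zero.2 hne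
  have hind : IsAdapted ω (β⁻¹ • x) (v - γ • u) (((β - γ) * r * β)⁻¹ • (v - β • u)) :=
    h.replace (inv_ne_zero hβ) <| by
      have hform : ω (v - γ • u) (v - β • u) = (β - γ) * ω u v := by
        simp only [map_sub, map_smul, LinearMap.sub_apply, LinearMap.smul_apply, smul_eq_mul,
          H.form_isAlt.self_eq_zero, ← H.form_isAlt.neg u v]
        ring
      rw [map_smul, hform]
      simp [hsub, hr, hβ, h.form_ne_zero]
  refine H.isOmegaLieIsoTo_C hdim (hind.linearIndependent H.form_isAlt) ?_ ?_ ?_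
  all_goals
    simp only [map_sub, map_smul, LinearMap.sub_apply, LinearMap.smul_apply,
      H.bracket_isAlt.self_eq_zero, ← H.bracket_isAlt.neg u v, h.bracket_left,
      h.bracket_right, h.bracket_plane]
    match_scalars <;> field_simp
    ring

theorem isOmegaLieIsoTo_L2_of_isCompanion (H : IsOmegaLie B ω) (hdim : Module.finrank ℝ L = 3)
    (h : IsCompanion B ω q 0 r x u v) (hq : q ≠ 0) (hr : r ≠ 0) :
    IsOmegaLieIsoTo B ω brL2 omL2 := by
  have hind : IsAdapted ω (q⁻¹ • x) v (-(q ^ 2 * r)⁻¹ • (v - q • u)) :=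
    h.replace (inv_ne_zero hq) <| by
      simp [H.form_isAlt.self_eq_zero, ← H.form_isAlt.neg u v, hq, hr, h.form_ne_zero]
  refine H.isOmegaLieIsoTo_L2 hdim (linearIndependent_rotate
    (linearIndependent_rotate (hind.linearIndependent H.form_isAlt))) ?_ ?_ ?_
  all_goals
    simp only [map_sub, map_smul, LinearMap.sub_apply, LinearMap.smul_apply,
      H.bracket_isAlt.self_eq_zero, ← H.bracket_isAlt.neg x u, ← H.bracket_isAlt.neg x v,
      h.bracket_left, h.bracket_right, h.bracket_plane]
    match_scalars <;> field_simp <;> ring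

theorem isOmegaLieIsoTo_B1_or_Bm1_of_isCompanion (H : IsOmegaLie B ω)
    (hdim : Module.finrank ℝ L = 3) {β : ℝ} (h : IsCompanion B ω (2 * β) (β ^ 2) r x u v)
    (hβ : β ≠ 0) (hr : r = -1 ∨ r = 1) :
    IsOmegaLieIsoTo B ω brB1 omB1 ∨ IsOmegaLieIsoTo B ω brBm1 omBm1 := by
  have hind : LinearIndependent ℝ ![β⁻¹ • x, β⁻¹ • (v - β • u), u] :=
    (h.replace (inv_ne_zero hβ) (by
      simp [H.form_isAlt.self_eq_zero, ← H.form_isAlt.neg u v, hβ,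
        h.form_ne_zero])).linearIndependent H.form_isAlt
  rcases hr with rfl | rfl
  · refine .inl (H.isOmegaLieIsoTo_B1 hdim hind ?_ ?_ ?_)
    all_goals
      simp only [map_sub, map_smul, LinearMap.sub_apply, LinearMap.smul_apply,
        H.bracket_isAlt.self_eq_zero, ← H.bracket_isAlt.neg u v, h.bracket_left,
        h.bracket_right, h.bracket_plane]
      match_scalars <;> field_simp <;> ring
  · refine .inr (H.isOmegaLieIsoTo_Bm1 hdim hind ?_ ?_ ?_)
    all_goals
      simp only [map_sub, map_smul, LinearMap.sub_apply, LinearMap.smul_apply,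
        H.bracket_isAlt.self_eq_zero, ← H.bracket_isAlt.neg u v, h.bracket_left,
        h.bracket_right, h.bracket_plane]
      match_scalars <;> field_simp <;> ring

theorem isOmegaLieIsoTo_Ep_or_Em_of_isCompanion (H : IsOmegaLie B ω)
    (hdim : Module.finrank ℝ L = 3) {l : ℝ} (h : IsCompanion B ω q (l ^ 2) r x u v)
    (hl : l ≠ 0) (hr : r = -1 ∨ r = 1) :
    IsOmegaLieIsoTo B ω (brEp (q / l)) (omEp (q / l)) ∨
      IsOmegaLieIsoTo B ω (brEm (q / l)) (omEm (q / l)) := by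
  have hind : LinearIndependent ℝ ![l⁻¹ • x, u, -l⁻¹ • v] :=
    (h.replace (inv_ne_zero hl) (by simp [hl, h.form_ne_zero])).linearIndependent H.form_isAlt
  rcases hr with rfl | rfl
  · refine .inl (H.isOmegaLieIsoTo_Ep hdim hind ?_ ?_ ?_)
    all_goals
      simp only [map_smul, LinearMap.smul_apply, h.bracket_left, h.bracket_right,
        h.bracket_plane]
      match_scalars <;> field_simp
  · refine .inr (H.isOmegaLieIsoTo_Em hdim hind ?_ ?_ ?_)
    all_goals
      simp only [map_smul, LinearMap.smul_apply, h.bracket_left, h.bracket_right,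
        h.bracket_plane]
      match_scalars <;> field_simp

theorem isOmegaLieIsoTo_of_isCompanion (H : IsOmegaLie B ω) (hdim : Module.finrank ℝ L = 3)
    (h : IsCompanion B ω q p r x u v) :
    IsOmegaLieIsoTo B ω brL2 omL2 ∨
      (∃ α : ℝ, α ≠ 0 ∧ IsOmegaLieIsoTo B ω (brC α) (omC α)) ∨
      IsOmegaLieIsoTo B ω brB1 omB1 ∨
      IsOmegaLieIsoTo B ω brBm1 omBm1 ∨
      (∃ α : ℝ, α ≠ 0 ∧ IsOmegaLieIsoTo B ω (brEp α) (omEp α)) ∨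
      (∃ α : ℝ, α ≠ 0 ∧ IsOmegaLieIsoTo B ω (brEm α) (omEm α)) := by
  obtain ⟨hq, hr⟩ : q ≠ 0 ∧ r ≠ 0 :=
    mul_ne_zero_iff.1 (H.mul_eq_form_of_isCompanion h ▸ h.form_ne_zero)
  rcases lt_trichotomy 0 (q ^ 2 - 4 * p) with hpos | hzero | hneg
  · obtain ⟨β, γ, rfl, rfl, hne, hβ⟩ := exists_add_eq_mul_eq_of_discrim_pos hq hpos
    by_cases hγ : γ = 0
    · subst hγ
      rw [mul_zero] at h
      exact .inl (H.isOmegaLieIsoTo_L2_of_isCompanion hdim h hq hr)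
    · exact .inr (.inl ⟨γ / β, div_ne_zero hγ hβ,
        H.isOmegaLieIsoTo_C_of_isCompanion hdim h hr hne hβ⟩)
  · obtain ⟨ε, u, v, hε, h⟩ := h.exists_normalized hr
    obtain ⟨β, rfl⟩ : ∃ β, q = 2 * β := ⟨q / 2, by ring⟩
    obtain rfl : p = β ^ 2 := by linarith
    rcases H.isOmegaLieIsoTo_B1_or_Bm1_of_isCompanion hdim h (by simpa using hq) hε with hB | hB
    · exact .inr (.inr (.inl hB))
    · exact .inr (.inr (.inr (.inl hB)))
  · obtain ⟨ε, u, v, hε, h⟩ := h.exists_normalized hr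
    have hp : 0 < p := by nlinarith [sq_nonneg q]
    have hl : √p ≠ 0 := (Real.sqrt_pos.2 hp).ne'
    rw [← Real.sq_sqrt hp.le] at h
    have hα : q / √p ≠ 0 := div_ne_zero hq hl
    rcases H.isOmegaLieIsoTo_Ep_or_Em_of_isCompanion hdim h hl hε with hE | hE
    · exact .inr (.inr (.inr (.inr (.inl ⟨_, hα, hE⟩))))
    · exact .inr (.inr (.inr (.inr (.inr ⟨_, hα, hE⟩))))

theorem isOmegaLieIsoTo_of_traceAd_ne_zero (H : IsOmegaLie B ω)
    (hdim : Module.finrank ℝ L = 3) (h : IsAdapted ω x y z) (hx : traceAd B x ≠ 0) :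
    IsOmegaLieIsoTo B ω brL2 omL2 ∨
      (∃ α : ℝ, α ≠ 0 ∧ IsOmegaLieIsoTo B ω (brC α) (omC α)) ∨
      IsOmegaLieIsoTo B ω brB1 omB1 ∨
      IsOmegaLieIsoTo B ω brBm1 omBm1 ∨
      (∃ α : ℝ, α ≠ 0 ∧ IsOmegaLieIsoTo B ω (brEp α) (omEp α)) ∨
      (∃ α : ℝ, α ≠ 0 ∧ IsOmegaLieIsoTo B ω (brEm α) (omEm α)) := by
  by_cases hform : ∀ u, traceAd B u = 0 → ω u (B x u) = 0
  · obtain ⟨y, z, h, hy, hz⟩ := H.exists_isAdapted_traceAd_eq_zero h hx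
    obtain ⟨b, r, hb, hr, hxy, hxz, hyz⟩ :=
      H.exists_bracket_eq_smul_of_forall_form_eq_zero hdim h hx hy hz hform
    exact .inr (.inl ⟨1, one_ne_zero, H.isOmegaLieIsoTo_C_of_smul hdim h hb hr hxy hxz hyz⟩)
  · push Not at hform
    obtain ⟨u, hu, hcyclic⟩ := hform
    obtain ⟨q, p, r, hcomp⟩ :=
      H.exists_isCompanion hdim hx hu ⟨h.radical, h.ne_zero, hcyclic⟩
    exact H.isOmegaLieIsoTo_of_isCompanion hdim hcomp

end IsOmegaLie

/-- Every 3-dimensional real ω-Lie algebra with `ω` not identically zero is isomorphic to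
one of `L₁`, `L₂`, `A_α` (`α ∈ ℝ`), `C_α` (`0 ≠ α ∈ ℝ`), `B₁`, `B₋₁`, `E_α⁺`
(`0 ≠ α ∈ ℝ`), or `E_α⁻` (`0 ≠ α ∈ ℝ`). -/
theorem omega_lie_real_classification
    {L : Type*} [AddCommGroup L] [Module ℝ L] [FiniteDimensional ℝ L]
    (bracket : L →ₗ[ℝ] L →ₗ[ℝ] L) (ω : L →ₗ[ℝ] L →ₗ[ℝ] ℝ)
    (hanti : ∀ a b : L, bracket a b = - bracket b a)
    (hskew : ∀ a b : L, ω a b = - ω b a)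
    (hjac : ∀ a b c : L,
      bracket (bracket a b) c + bracket (bracket b c) a + bracket (bracket c a) b
        = ω a b • c + ω b c • a + ω c a • b)
    (hdim : Module.finrank ℝ L = 3)
    (hω : ¬ ∀ a b : L, ω a b = 0) :
    IsOmegaLieIsoTo bracket ω brL1 omL1 ∨
      IsOmegaLieIsoTo bracket ω brL2 omL2 ∨
      (∃ α : ℝ, IsOmegaLieIsoTo bracket ω (brA α) omA) ∨
      (∃ α : ℝ, α ≠ 0 ∧ IsOmegaLieIsoTo bracket ω (brC α) (omC α)) ∨
      IsOmegaLieIsoTo bracket ω brB1 omB1 ∨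
      IsOmegaLieIsoTo bracket ω brBm1 omBm1 ∨
      (∃ α : ℝ, α ≠ 0 ∧ IsOmegaLieIsoTo bracket ω (brEp α) (omEp α)) ∨
      (∃ α : ℝ, α ≠ 0 ∧ IsOmegaLieIsoTo bracket ω (brEm α) (omEm α)) := by
  have : IsAddTorsionFree L := .of_isTorsionFree ℝ L
  have H : IsOmegaLie bracket ω :=
    ⟨fun a ↦ self_eq_neg.1 (hanti a a), fun a ↦ self_eq_neg.1 (hskew a a), hjac⟩
  push Not at hω
  obtain ⟨y, z, hyz⟩ := hω
  obtain ⟨x, h⟩ := exists_isAdapted H.form_isAlt hdim hyz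
  by_cases hx : traceAd bracket x = 0
  · rcases H.isOmegaLieIsoTo_L1_or_A hdim h hx with hL1 | hA
    · exact .inl hL1
    · exact .inr (.inr (.inl hA))
  · rcases H.isOmegaLieIsoTo_of_traceAd_ne_zero hdim h hx with hL2 | hrest
    · exact .inr (.inl hL2)
    · exact .inr (.inr (.inr hrest))
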